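/- Let g, h : ℝ → ℝ be convex and differentiable, c > 0, κ > 0, F(γ, i) = γ + c·(g(i − γ) − h(i − γ) − κ·cos γ), B = [γ̲, γ̄] × [i̲, ī] with [γ̲, γ̄] ⊆ [−π/2, π/2], and (γ⁰, i⁰) a reference point with γ⁰ ∈ [−π/2, π/2]. Suppose the numbers γ̄⁺ and γ̲⁺ satisfy γ̄⁺ ≥ ψ(γᵥ, iᵥ) for all four vertices (γᵥ, iᵥ) of B, where ψ(γ, i) = γ + c·(g(i − γ) − h(i⁰ − γ⁰) − h′(i⁰ − γ⁰)·(i − γ − (i⁰ − γ⁰)) − κ·cos γ), and γ̲⁺ ≤ φ(γᵥ, iᵥ) for all four vertices, where φ(γ, i) = γ + c·(g(i⁰ − γ⁰) + g′(i⁰ − γ⁰)·(i − γ − (i⁰ − γ⁰)) − h(i − γ) − κ·cos γ⁰ + κ·sin γ⁰·(γ − γ⁰)). Then for every (γ, i) ∈ B, the true successor state satisfies γ̲⁺ ≤ F(γ, i) ≤ γ̄⁺. -/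

import Mathlib

/-!
Linearising `h` at the reference point gives `F ≤ ψ`, and linearising `g` and `-cos` (convex on
`[-π/2, π/2]`) gives `φ ≤ F`; both are instances of the tangent-line inequality
`tangent_le_of_convexOn`. The functions `ψ` and `-φ` have the form `G (i - γ) + K γ` with `G` and
`K` convex, so they are convex in each variable separately and their maximum over the box is
attained at a vertex (`le_of_vertices`). The vertex inequalities therefore bound `ψ` from above and
`φ` from below on the whole box.
-/

theorem tangent_le_of_convexOn {s : Set ℝ} {f : ℝ → ℝ} {f' x y : ℝ} (hf : ConvexOn ℝ s f)
    (hx : x ∈ s) (hy : y ∈ s) (hd : HasDerivAt f f' x) : f x + f' * (y - x) ≤ f y := by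
  rcases lt_trichotomy x y with hxy | rfl | hxy
  · have := hf.le_slope_of_hasDerivAt hx hy hxy hd
    rw [slope_def_field, le_div_iff₀ (sub_pos.2 hxy)] at this
    linarith
  · simp
  · have := hf.slope_le_of_hasDerivAt hy hx hxy hd
    rw [slope_def_field, div_le_iff₀ (sub_pos.2 hxy)] at this
    linarith

/-- A function `(γ, i) ↦ G (i - γ) + K γ` with `G` and `K` convex is bounded on a box by any
common upper bound of its values at the four vertices. -/
theorem le_of_vertices {G K : ℝ → ℝ} {a b p q M : ℝ} (hG : ConvexOn ℝ Set.univ G)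
    (hK : ConvexOn ℝ (Set.Icc a b) K)
    (hM : ∀ x ∈ ({a, b} : Set ℝ), ∀ y ∈ ({p, q} : Set ℝ), G (y - x) + K x ≤ M)
    {x y : ℝ} (hx : x ∈ Set.Icc a b) (hy : y ∈ Set.Icc p q) : G (y - x) + K x ≤ M := by
  have hab : a ≤ b := hx.1.trans hx.2
  have hpq : p ≤ q := hy.1.trans hy.2
  have hGx : ∀ v, ConvexOn ℝ (Set.Icc a b) fun u => G (v - u) + K u := by
    intro v
    refine ConvexOn.add ⟨convex_Icc a b, ?_⟩ hK
    intro s _ t _ α β hα hβ hαβ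
    have := hG.2 (Set.mem_univ (v - s)) (Set.mem_univ (v - t)) hα hβ hαβ
    convert this using 2
    simp only [smul_eq_mul]
    linear_combination (-v) * hαβ
  have hGy : ∀ u, ConvexOn ℝ (Set.Icc p q) fun v => G (v - u) + K u := by
    intro u
    refine ConvexOn.add ⟨convex_Icc p q, ?_⟩ (convexOn_const _ (convex_Icc p q))
    intro s _ t _ α β hα hβ hαβ
    have := hG.2 (Set.mem_univ (s - u)) (Set.mem_univ (t - u)) hα hβ hαβ
    convert this using 2
    simp only [smul_eq_mul]
    linear_combination u * hαβ
  have hedge : ∀ u ∈ ({a, b} : Set ℝ), G (y - u) + K u ≤ M := fun u hu =>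
    ((hGy u).le_max_of_mem_Icc (Set.left_mem_Icc.2 hpq) (Set.right_mem_Icc.2 hpq) hy).trans
      (max_le (hM u hu p (by simp)) (hM u hu q (by simp)))
  exact ((hGx y).le_max_of_mem_Icc (Set.left_mem_Icc.2 hab) (Set.right_mem_Icc.2 hab) hx).trans
    (max_le (hedge a (by simp)) (hedge b (by simp)))

/-- The gap between a convex function and an affine one, scaled by `c ≥ 0`, is convex. -/
theorem convexOn_mul_sub_affine {f : ℝ → ℝ} (hf : ConvexOn ℝ Set.univ f) {c : ℝ} (hc : 0 ≤ c)
    (A D t : ℝ) : ConvexOn ℝ Set.univ fun x => c * (f x - A - D * (x - t)) := by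
  refine ⟨convex_univ, ?_⟩
  intro x _ y _ α β hα hβ hαβ
  have := mul_le_mul_of_nonneg_left (hf.2 (Set.mem_univ x) (Set.mem_univ y) hα hβ hαβ) hc
  obtain rfl : β = 1 - α := by linarith
  simp only [smul_eq_mul] at this ⊢
  linarith

/-- Tube invariance: if the next tube cross-section bounds `γ̲⁺ ≤ · ≤ γ̄⁺` satisfy the
convex vertex inequalities (eqs. 29–30) with respect to the majorant `ψ` and minorant `φ`,
then the state propagated through the exact difference-of-convex dynamics `F` from any
point of the current box remains inside the next tube cross-section. -/
theorem tube_invariance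
    (g h : ℝ → ℝ)
    (hg : ConvexOn ℝ Set.univ g) (hh : ConvexOn ℝ Set.univ h)
    (hgd : Differentiable ℝ g) (hhd : Differentiable ℝ h)
    (c κ : ℝ) (hc : 0 < c) (hκ : 0 < κ)
    (γlo γhi ilo ihi γ0 i0 : ℝ)
    (hlo : -(Real.pi / 2) ≤ γlo) (hhi : γhi ≤ Real.pi / 2)
    (hγ0 : γ0 ∈ Set.Icc (-(Real.pi / 2)) (Real.pi / 2))
    (F : ℝ → ℝ → ℝ)
    (hF : ∀ γ i, F γ i = γ + c * (g (i - γ) - h (i - γ) - κ * Real.cos γ))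
    (ψ : ℝ → ℝ → ℝ)
    (hψ : ∀ γ i, ψ γ i = γ + c * (g (i - γ) - h (i0 - γ0)
      - deriv h (i0 - γ0) * (i - γ - (i0 - γ0)) - κ * Real.cos γ))
    (φ : ℝ → ℝ → ℝ)
    (hφ : ∀ γ i, φ γ i = γ + c * (g (i0 - γ0)
      + deriv g (i0 - γ0) * (i - γ - (i0 - γ0)) - h (i - γ)
      - κ * Real.cos γ0 + κ * Real.sin γ0 * (γ - γ0)))
    (γupNext γloNext : ℝ)
    (hup : ∀ γv ∈ ({γlo, γhi} : Set ℝ), ∀ iv ∈ ({ilo, ihi} : Set ℝ), ψ γv iv ≤ γupNext)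
    (hdown : ∀ γv ∈ ({γlo, γhi} : Set ℝ), ∀ iv ∈ ({ilo, ihi} : Set ℝ), γloNext ≤ φ γv iv) :
    ∀ γ i, γ ∈ Set.Icc γlo γhi → i ∈ Set.Icc ilo ihi →
      γloNext ≤ F γ i ∧ F γ i ≤ γupNext := by
  intro γ i hγ hi
  have hcos : ConvexOn ℝ (Set.Icc (-(Real.pi / 2)) (Real.pi / 2)) (fun x => -Real.cos x) :=
    strictConcaveOn_cos_Icc.concaveOn.neg
  have hsub : Set.Icc γlo γhi ⊆ Set.Icc (-(Real.pi / 2)) (Real.pi / 2) :=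
    Set.Icc_subset_Icc hlo hhi
  have tg := tangent_le_of_convexOn hg (Set.mem_univ (i0 - γ0)) (Set.mem_univ (i - γ))
    (hgd _).hasDerivAt
  have th := tangent_le_of_convexOn hh (Set.mem_univ (i0 - γ0)) (Set.mem_univ (i - γ))
    (hhd _).hasDerivAt
  have tc : -Real.cos γ0 + Real.sin γ0 * (γ - γ0) ≤ -Real.cos γ :=
    tangent_le_of_convexOn hcos hγ0 (hsub hγ)
      (by simpa using (Real.hasDerivAt_cos γ0).fun_neg)
  constructor
  · have hK : ConvexOn ℝ (Set.Icc γlo γhi)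
        fun x => -x + c * (κ * Real.cos γ0 - κ * Real.sin γ0 * (x - γ0)) := by
      refine ⟨convex_Icc _ _, ?_⟩
      intro x _ y _ α β hα hβ hαβ
      obtain rfl : β = 1 - α := by linarith
      simp only [smul_eq_mul]
      linarith
    have hmin := le_of_vertices (M := -γloNext) (p := ilo) (q := ihi)
      (convexOn_mul_sub_affine hh hc.le (g (i0 - γ0)) (deriv g (i0 - γ0)) (i0 - γ0)) hK
      (fun x hx y hy => by have := hdown x hx y hy; rw [hφ] at this; linarith) hγ hi
    have h1 := mul_le_mul_of_nonneg_left tg hc.le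
    have h2 := mul_le_mul_of_nonneg_left tc (mul_pos hc hκ).le
    rw [hF]
    linarith
  · have hK : ConvexOn ℝ (Set.Icc γlo γhi) fun x => x + c * κ * (-Real.cos x) :=
      (convexOn_id (convex_Icc _ _)).add
        ((hcos.subset hsub (convex_Icc _ _)).smul (mul_pos hc hκ).le)
    have hmax := le_of_vertices (M := γupNext) (p := ilo) (q := ihi)
      (convexOn_mul_sub_affine hg hc.le (h (i0 - γ0)) (deriv h (i0 - γ0)) (i0 - γ0)) hK
      (fun x hx y hy => by have := hup x hx y hy; rw [hψ] at this; linarith) hγ hi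
    have h1 := mul_le_mul_of_nonneg_left th hc.le
    rw [hF]
    linarith
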